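/- arXiv:2510.19953 — 6 statements merged into one kernel-verified Lean document; each statement's English description precedes it below -/
import Mathlib

section
/- Let d ≥ 1, let f : ℝ^d → ℝ be differentiable with L-Lipschitz gradient ∇f, and fix x, v ∈ ℝ^d. Define δ(μ) := (f(x + μ·v) − f(x))/μ − ⟨∇f(x), v⟩ for μ > 0. Then for all 0 < μ' ≤ μ, |δ(μ) − δ(μ')| ≤ (L/2)·‖v‖²·(μ − μ'). -/
open scoped RealInnerProductSpace

/-!
Formally `δ μ = ∫₀¹ ⟪∇f (x + t μ v) - ∇f x, v⟫ dt`, so that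
`δ μ - δ μ' = ∫₀¹ ⟪∇f (x + t μ v) - ∇f (x + t μ' v), v⟫ dt`, whose integrand is at most
`L ‖v‖² |μ - μ'| t` in absolute value. A mean value inequality for derivatives of at most linear
growth replaces the integral, and gives the same bound for maps between normed spaces.
-/

section DividedDifference

open Set
open AffineMap (lineMap hasDerivWithinAt_lineMap)

variable {F : Type*} [NormedAddCommGroup F] [NormedSpace ℝ F]

theorem norm_image_sub_le_of_norm_deriv_le_mul_sub {g g' : ℝ → F} {a b C : ℝ}
    (hg : ∀ t ∈ Icc a b, HasDerivWithinAt g (g' t) (Icc a b) t)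
    (bound : ∀ t ∈ Ico a b, ‖g' t‖ ≤ C * (t - a)) :
    ∀ t ∈ Icc a b, ‖g t - g a‖ ≤ C / 2 * (t - a) ^ 2 := by
  have hquad (t : ℝ) : HasDerivAt (fun t ↦ C / 2 * (t - a) ^ 2) (C * (t - a)) t :=
    ((((hasDerivAt_id t).sub_const a).pow 2).const_mul (C / 2)).congr_deriv
      (by push_cast [id]; ring)
  have hright (t : ℝ) (ht : t ∈ Ico a b) :
      HasDerivWithinAt (fun t ↦ g t - g a) (g' t) (Ici t) t :=
    ((hg t (Ico_subset_Icc_self ht)).mono_of_mem_nhdsWithin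
      (Icc_mem_nhdsGE_of_mem ht)).sub_const (g a)
  exact image_norm_le_of_norm_deriv_right_le_deriv_boundary
    (fun t ht ↦ ((hg t ht).sub_const (g a)).continuousWithinAt) hright (by simp) hquad bound

-- This path runs from `0` at `t = 0` to `slope g a b` at `t = 1`.
theorem hasDerivWithinAt_inv_smul_comp_lineMap_sub {g : ℝ → F} {D : F} {s : Set ℝ}
    (hs : Convex ℝ s) {a b t : ℝ} (ha : a ∈ s) (hb : b ∈ s) (hba : b ≠ a)
    (hg : HasDerivWithinAt g D s (lineMap a b t)) :
    HasDerivWithinAt (fun t ↦ (b - a)⁻¹ • (g (lineMap a b t) - g a)) D (Icc 0 1) t :=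
  (((hg.scomp t hasDerivWithinAt_lineMap (hs.mapsTo_lineMap ha hb)).sub_const (g a)).const_smul
    (b - a)⁻¹).congr_deriv (inv_smul_smul₀ (sub_ne_zero.2 hba) D)

theorem norm_slope_sub_slope_le_of_norm_deriv_sub_le {g g' : ℝ → F} {s : Set ℝ} {K : ℝ}
    (hs : Convex ℝ s) (hg : ∀ t ∈ s, HasDerivWithinAt g (g' t) s t)
    (hlip : ∀ t ∈ s, ∀ u ∈ s, ‖g' t - g' u‖ ≤ K * |t - u|)
    {a b c : ℝ} (ha : a ∈ s) (hb : b ∈ s) (hc : c ∈ s) (hba : b ≠ a) (hca : c ≠ a) :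
    ‖slope g a b - slope g a c‖ ≤ K / 2 * |b - c| := by
  have hderiv (t : ℝ) (ht : t ∈ Icc (0 : ℝ) 1) :=
    (hasDerivWithinAt_inv_smul_comp_lineMap_sub hs ha hb hba (hg _ (hs.lineMap_mem ha hb ht))).sub
      (hasDerivWithinAt_inv_smul_comp_lineMap_sub hs ha hc hca (hg _ (hs.lineMap_mem ha hc ht)))
  have hbound (t : ℝ) (ht : t ∈ Ico (0 : ℝ) 1) :
      ‖g' (lineMap a b t) - g' (lineMap a c t)‖ ≤ K * |b - c| * (t - 0) := by
    have hsub : lineMap a b t - lineMap a c t = t * (b - c) := by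
      simp only [AffineMap.lineMap_apply_ring']
      ring
    have ht' : t ∈ Icc (0 : ℝ) 1 := Ico_subset_Icc_self ht
    calc ‖g' (lineMap a b t) - g' (lineMap a c t)‖
        ≤ K * |lineMap a b t - lineMap a c t| :=
          hlip _ (hs.lineMap_mem ha hb ht') _ (hs.lineMap_mem ha hc ht')
      _ = K * |b - c| * (t - 0) := by rw [hsub, abs_mul, abs_of_nonneg ht.1]; ring
  have hmean := norm_image_sub_le_of_norm_deriv_le_mul_sub hderiv hbound 1
    (right_mem_Icc.2 zero_le_one)
  simpa [slope_def_module, mul_div_right_comm] using hmean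

theorem hasDerivWithinAt_comp_add_smul {𝕜 E F : Type*} [NontriviallyNormedField 𝕜]
    [NormedAddCommGroup E] [NormedSpace 𝕜 E] [NormedAddCommGroup F] [NormedSpace 𝕜 F]
    {f : E → F} {A : E →L[𝕜] F} {s : Set E} {x v : E} {t : 𝕜}
    (hf : HasFDerivWithinAt f A s (x + t • v)) :
    HasDerivWithinAt (fun t : 𝕜 ↦ f (x + t • v)) (A v) ((fun t : 𝕜 ↦ x + t • v) ⁻¹' s) t := by
  have hline : HasDerivAt (fun t : 𝕜 ↦ x + t • v) v t := by
    simpa using ((hasDerivAt_id t).smul_const v).const_add x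
  exact hf.comp_hasDerivWithinAt t hline.hasDerivWithinAt (mapsTo_preimage _ s)

theorem divided_difference_remainder_difference_bound_general {E : Type*}
    [NormedAddCommGroup E] [NormedSpace ℝ E] {f : E → F} {f' : E → E →L[ℝ] F} {s : Set E} {L : ℝ}
    (hs : Convex ℝ s) (hf : ∀ y ∈ s, HasFDerivWithinAt f (f' y) s y)
    (hlip : ∀ y ∈ s, ∀ z ∈ s, ‖f' y - f' z‖ ≤ L * ‖y - z‖)
    {x v : E} {μ μ' : ℝ} (hx : x ∈ s) (hxμ : x + μ • v ∈ s) (hxμ' : x + μ' • v ∈ s)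
    (hμ : μ ≠ 0) (hμ' : μ' ≠ 0) :
    ‖(μ⁻¹ • (f (x + μ • v) - f x) - f' x v) - (μ'⁻¹ • (f (x + μ' • v) - f x) - f' x v)‖ ≤
      L / 2 * ‖v‖ ^ 2 * |μ - μ'| := by
  have hlip_line (t : ℝ) (ht : x + t • v ∈ s) (u : ℝ) (hu : x + u • v ∈ s) :
      ‖f' (x + t • v) v - f' (x + u • v) v‖ ≤ L * ‖v‖ ^ 2 * |t - u| :=
    calc ‖f' (x + t • v) v - f' (x + u • v) v‖
        ≤ ‖f' (x + t • v) - f' (x + u • v)‖ * ‖v‖ :=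
          (f' (x + t • v) - f' (x + u • v)).le_opNorm v
      _ ≤ L * ‖(x + t • v) - (x + u • v)‖ * ‖v‖ := by gcongr; exact hlip _ ht _ hu
      _ = L * ‖v‖ ^ 2 * |t - u| := by
          rw [add_sub_add_left_eq_sub, ← sub_smul, norm_smul, Real.norm_eq_abs]; ring
  have hconvex : Convex ℝ ((fun t : ℝ ↦ x + t • v) ⁻¹' s) := by
    simpa [preimage_preimage] using
      (hs.translate_preimage_right x).linear_preimage (LinearMap.toSpanSingleton ℝ E v)
  have hslope := norm_slope_sub_slope_le_of_norm_deriv_sub_le hconvex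
    (fun t ht ↦ hasDerivWithinAt_comp_add_smul (hf _ ht)) hlip_line
    (a := 0) (by simpa using hx) hxμ hxμ' hμ hμ'
  rw [sub_sub_sub_cancel_right]
  simpa [slope_def_module, mul_div_right_comm] using hslope

end DividedDifference

theorem norm_fderiv_sub_fderiv_eq_norm_gradient_sub {𝕜 E : Type*} [RCLike 𝕜]
    [NormedAddCommGroup E] [InnerProductSpace 𝕜 E] [CompleteSpace E] (f : E → 𝕜) (x y : E) :
    ‖fderiv 𝕜 f x - fderiv 𝕜 f y‖ = ‖gradient f x - gradient f y‖ := by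
  rw [← toDual_gradient, ← toDual_gradient, ← map_sub, LinearIsometryEquiv.norm_map]

/-- For `f` differentiable with `L`-Lipschitz gradient and
`δ(μ) := (f (x + μ v) - f x)/μ - ⟪∇f x, v⟫`, one has
`|δ μ - δ μ'| ≤ (L/2) ‖v‖² (μ - μ')` for all `0 < μ' ≤ μ`. -/
theorem divided_difference_remainder_difference_bound
    (d : ℕ) (hd : 1 ≤ d) (f : EuclideanSpace ℝ (Fin d) → ℝ) (L : ℝ)
    (hf : Differentiable ℝ f)
    (hlip : ∀ x y : EuclideanSpace ℝ (Fin d),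
      ‖gradient f x - gradient f y‖ ≤ L * ‖x - y‖)
    (x v : EuclideanSpace ℝ (Fin d))
    (δ : ℝ → ℝ)
    (hδ : ∀ μ : ℝ, 0 < μ → δ μ = (f (x + μ • v) - f x) / μ - ⟪gradient f x, v⟫)
    (μ μ' : ℝ) (hμ' : 0 < μ') (hle : μ' ≤ μ) :
    |δ μ - δ μ'| ≤ (L / 2) * ‖v‖ ^ 2 * (μ - μ') := by
  have hμ : 0 < μ := hμ'.trans_le hle
  have hbound := divided_difference_remainder_difference_bound_general convex_univ
    (fun y _ ↦ (hf y).hasFDerivAt.hasFDerivWithinAt)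
    (fun y _ z _ ↦ (norm_fderiv_sub_fderiv_eq_norm_gradient_sub f y z).trans_le (hlip y z))
    (Set.mem_univ x) (Set.mem_univ (x + μ • v)) (Set.mem_univ (x + μ' • v)) hμ.ne' hμ'.ne'
  rw [hδ μ hμ, hδ μ' hμ', inner_gradient_left, div_eq_inv_mul, div_eq_inv_mul]
  simpa only [smul_eq_mul, Real.norm_eq_abs, abs_of_nonneg (sub_nonneg.2 hle)] using hbound
end

section
/- Let d ≥ 1, let f : ℝ^d → ℝ be differentiable with L-Lipschitz gradient ∇f, fix x, v ∈ ℝ^d, and let (μ_n)_{n≥1} be a sequence of positive reals with ∑_{n=1}^∞ μ_n < ∞. Writing Δ_n := (f(x + μ_n·v) − f(x))/μ_n, the sequence n ↦ Δ_{n+1} − Δ_n is absolutely summable, and ∑_{n=1}^∞ |Δ_{n+1} − Δ_n| ≤ (L/2)·‖v‖²·∑_{n=1}^∞ (μ_n + μ_{n+1}). -/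
open scoped RealInnerProductSpace

/-!
A Lipschitz derivative makes the first-order Taylor remainder quadratic, so the divided difference
at stepsize `t` lies within `L / 2 * ‖v‖ ^ 2 * |t|` of the directional derivative at `x`.
Consecutive divided differences are compared through this common limit, which turns summability of
the stepsizes into summability of the increments.
-/

theorem summable_add_succ {G : Type*} [AddCommGroup G] [TopologicalSpace G]
    [IsTopologicalAddGroup G] {b : ℕ → G} (hb : Summable b) :
    Summable fun n => b n + b (n + 1) :=
  hb.add ((summable_nat_add_iff 1).2 hb)

section SuccessiveDistances

variable {X : Type*} [PseudoMetricSpace X] {u : ℕ → X} {l : X} {b : ℕ → ℝ}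

theorem dist_succ_le_add_of_dist_le (hu : ∀ n, dist (u n) l ≤ b n) (n : ℕ) :
    dist (u n) (u (n + 1)) ≤ b n + b (n + 1) :=
  (dist_triangle_right _ _ l).trans (add_le_add (hu n) (hu (n + 1)))

theorem summable_dist_succ_of_dist_le (hu : ∀ n, dist (u n) l ≤ b n) (hb : Summable b) :
    Summable fun n => dist (u n) (u (n + 1)) :=
  .of_nonneg_of_le (fun _ => dist_nonneg) (dist_succ_le_add_of_dist_le hu) (summable_add_succ hb)

theorem tsum_dist_succ_le_of_dist_le (hu : ∀ n, dist (u n) l ≤ b n) (hb : Summable b) :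
    ∑' n, dist (u n) (u (n + 1)) ≤ ∑' n, (b n + b (n + 1)) :=
  (summable_dist_succ_of_dist_le hu hb).tsum_le_tsum (dist_succ_le_add_of_dist_le hu)
    (summable_add_succ hb)

end SuccessiveDistances

theorem norm_fderiv_sub_eq_norm_gradient_sub {𝕜 H : Type*} [RCLike 𝕜] [NormedAddCommGroup H]
    [InnerProductSpace 𝕜 H] [CompleteSpace H] (f : H → 𝕜) (x y : H) :
    ‖fderiv 𝕜 f x - fderiv 𝕜 f y‖ = ‖gradient f x - gradient f y‖ := by
  rw [gradient, gradient, ← map_sub, LinearIsometryEquiv.norm_map]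

/-- The divided difference of `f` at `x` along `v` with stepsize `t`, written `Δ` in the main
theorem with `t = μ n`. It takes the junk value `0` at `t = 0`. -/
noncomputable def dividedDifference {E F : Type*} [AddCommGroup E] [Module ℝ E] [AddCommGroup F]
    [Module ℝ F] (f : E → F) (x v : E) (t : ℝ) : F :=
  t⁻¹ • (f (x + t • v) - f x)

theorem dividedDifference_eq_div {E : Type*} [AddCommGroup E] [Module ℝ E] (f : E → ℝ) (x v : E)
    (t : ℝ) : dividedDifference f x v t = (f (x + t • v) - f x) / t := by
  rw [dividedDifference, smul_eq_mul, inv_mul_eq_div]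

section TaylorRemainder

variable {F : Type*} [NormedAddCommGroup F] [NormedSpace ℝ F]

theorem norm_image_sub_sub_smul_deriv_le {g g' : ℝ → F} {a b C : ℝ}
    (hg : ∀ t ∈ Set.Icc a b, HasDerivWithinAt g (g' t) (Set.Icc a b) t)
    (hC : ∀ t ∈ Set.Ico a b, ‖g' t - g' a‖ ≤ C * (t - a)) {t : ℝ} (ht : t ∈ Set.Icc a b) :
    ‖g t - g a - (t - a) • g' a‖ ≤ C / 2 * (t - a) ^ 2 := by
  have hasDeriv_remainder : ∀ s ∈ Set.Icc a b, HasDerivWithinAt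
      (fun s => g s - g a - (s - a) • g' a) (g' s - g' a) (Set.Icc a b) s := fun s hs => by
    simpa only [one_smul] using!
      ((hg s hs).sub_const (g a)).sub
        (((hasDerivWithinAt_id s _).sub_const a).smul_const (g' a))
  have hasDeriv_majorant : ∀ s, HasDerivAt (fun s => C / 2 * (s - a) ^ 2) (C * (s - a)) s :=
    fun s => by
      convert! (((hasDerivAt_id s).sub_const a).pow 2).const_mul (C / 2) using 1
      simp only [id, Nat.cast_ofNat]
      ring
  exact image_norm_le_of_norm_deriv_right_le_deriv_boundary
    (fun s hs => (hasDeriv_remainder s hs).continuousWithinAt)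
    (fun s hs => (hasDeriv_remainder s (Set.Ico_subset_Icc_self hs)).mono_of_mem_nhdsWithin
      (Icc_mem_nhdsGE_of_mem hs))
    (by simp) hasDeriv_majorant hC ht

variable {E : Type*} [NormedAddCommGroup E] [NormedSpace ℝ E]
  {f : E → F} {f' : E → E →L[ℝ] F} {s : Set E} {x : E} {L : ℝ}

theorem norm_image_add_sub_sub_fderiv_le (hs : StarConvex ℝ x s)
    (hf : ∀ y ∈ s, HasFDerivWithinAt f (f' y) s y)
    (hL : ∀ y ∈ s, ‖f' y - f' x‖ ≤ L * ‖y - x‖) {w : E} (hw : x + w ∈ s) :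
    ‖f (x + w) - f x - f' x w‖ ≤ L / 2 * ‖w‖ ^ 2 := by
  have segment_mem : Set.MapsTo (fun t : ℝ => x + t • w) (Set.Icc 0 1) s :=
    fun t ht => hs.add_smul_mem hw ht.1 ht.2
  have hasDeriv_segment : ∀ t ∈ Set.Icc (0 : ℝ) 1, HasDerivWithinAt
      (fun t : ℝ => f (x + t • w)) (f' (x + t • w) w) (Set.Icc 0 1) t := fun t ht => by
    have h : HasDerivWithinAt (fun t : ℝ => x + t • w) w (Set.Icc 0 1) t := by
      simpa only [one_smul] using! ((hasDerivWithinAt_id t _).smul_const w).const_add x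
    exact (hf _ (segment_mem ht)).comp_hasDerivWithinAt t h segment_mem
  have deriv_segment_sub_le : ∀ t ∈ Set.Ico (0 : ℝ) 1,
      ‖f' (x + t • w) w - f' (x + (0 : ℝ) • w) w‖ ≤ L * ‖w‖ ^ 2 * (t - 0) := fun t ht => by
    calc ‖f' (x + t • w) w - f' (x + (0 : ℝ) • w) w‖
        = ‖(f' (x + t • w) - f' x) w‖ := by simp only [zero_smul, add_zero, sub_apply]
      _ ≤ ‖f' (x + t • w) - f' x‖ * ‖w‖ := ContinuousLinearMap.le_opNorm _ _
      _ ≤ L * ‖x + t • w - x‖ * ‖w‖ := by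
        gcongr
        exact hL _ (segment_mem (Set.Ico_subset_Icc_self ht))
      _ = L * ‖w‖ ^ 2 * (t - 0) := by
        rw [add_sub_cancel_left, norm_smul, Real.norm_of_nonneg ht.1]
        ring
  have remainder_le := norm_image_sub_sub_smul_deriv_le hasDeriv_segment deriv_segment_sub_le
    (Set.right_mem_Icc.2 zero_le_one)
  simpa only [one_smul, zero_smul, add_zero, sub_zero, one_pow, mul_one, mul_div_right_comm]
    using remainder_le

theorem norm_dividedDifference_sub_fderiv_le (hs : StarConvex ℝ x s)
    (hf : ∀ y ∈ s, HasFDerivWithinAt f (f' y) s y)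
    (hL : ∀ y ∈ s, ‖f' y - f' x‖ ≤ L * ‖y - x‖) {v : E} {t : ℝ} (ht : t ≠ 0)
    (hmem : x + t • v ∈ s) :
    ‖dividedDifference f x v t - f' x v‖ ≤ L / 2 * ‖v‖ ^ 2 * |t| := by
  have remainder_eq : dividedDifference f x v t - f' x v =
      t⁻¹ • (f (x + t • v) - f x - f' x (t • v)) := by
    rw [dividedDifference, map_smul, smul_sub t⁻¹ (_ - _), inv_smul_smul₀ ht]
  calc ‖dividedDifference f x v t - f' x v‖
      = |t|⁻¹ * ‖f (x + t • v) - f x - f' x (t • v)‖ := by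
        rw [remainder_eq, norm_smul, norm_inv, Real.norm_eq_abs]
    _ ≤ |t|⁻¹ * (L / 2 * ‖t • v‖ ^ 2) := by
        gcongr
        exact norm_image_add_sub_sub_fderiv_le hs hf hL hmem
    _ = L / 2 * ‖v‖ ^ 2 * |t| := by
        rw [norm_smul, Real.norm_eq_abs]
        field_simp

theorem divided_difference_telescoping_abs_summable_general (hs : StarConvex ℝ x s)
    (hf : ∀ y ∈ s, HasFDerivWithinAt f (f' y) s y)
    (hL : ∀ y ∈ s, ‖f' y - f' x‖ ≤ L * ‖y - x‖) {v : E} {μ : ℕ → ℝ} (hμ : ∀ n, μ n ≠ 0)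
    (hmem : ∀ n, x + μ n • v ∈ s) (hsum : Summable fun n => |μ n|) :
    Summable (fun n =>
        ‖dividedDifference f x v (μ (n + 1)) - dividedDifference f x v (μ n)‖) ∧
      ∑' n, ‖dividedDifference f x v (μ (n + 1)) - dividedDifference f x v (μ n)‖ ≤
        L / 2 * ‖v‖ ^ 2 * ∑' n, (|μ n| + |μ (n + 1)|) := by
  have dist_le : ∀ n, dist (dividedDifference f x v (μ n)) (f' x v) ≤ L / 2 * ‖v‖ ^ 2 * |μ n| :=
    fun n => (dist_eq_norm _ _).trans_le
      (norm_dividedDifference_sub_fderiv_le hs hf hL (hμ n) (hmem n))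
  have bound_summable := hsum.mul_left (L / 2 * ‖v‖ ^ 2)
  simp only [← dist_eq_norm', ← tsum_mul_left, mul_add]
  exact ⟨summable_dist_succ_of_dist_le dist_le bound_summable,
    tsum_dist_succ_le_of_dist_le dist_le bound_summable⟩

end TaylorRemainder

/-- For `f` differentiable with `L`-Lipschitz gradient and positive
summable stepsizes `(μ n)`, the differences of divided differences
`Δ n := (f (x + μ n • v) - f x)/μ n` are absolutely summable, with
`∑ |Δ (n+1) - Δ n| ≤ (L/2) ‖v‖² ∑ (μ n + μ (n+1))`. -/
theorem divided_difference_telescoping_abs_summable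
    (d : ℕ) (hd : 1 ≤ d) (f : EuclideanSpace ℝ (Fin d) → ℝ) (L : ℝ)
    (hf : Differentiable ℝ f)
    (hlip : ∀ x y : EuclideanSpace ℝ (Fin d),
      ‖gradient f x - gradient f y‖ ≤ L * ‖x - y‖)
    (x v : EuclideanSpace ℝ (Fin d))
    (μ : ℕ → ℝ) (hμpos : ∀ n, 0 < μ n) (hμsum : Summable μ)
    (Δ : ℕ → ℝ) (hΔ : ∀ n, Δ n = (f (x + μ n • v) - f x) / μ n) :
    Summable (fun n => |Δ (n + 1) - Δ n|) ∧
      ∑' n, |Δ (n + 1) - Δ n| ≤ (L / 2) * ‖v‖ ^ 2 * ∑' n, (μ n + μ (n + 1)) := by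
  simpa only [hΔ, ← dividedDifference_eq_div, abs_of_pos (hμpos _), Real.norm_eq_abs] using
    divided_difference_telescoping_abs_summable_general (starConvex_univ x)
      (fun y _ => (hf y).hasFDerivAt.hasFDerivWithinAt)
      (fun y _ => (norm_fderiv_sub_eq_norm_gradient_sub f y x).trans_le (hlip y x))
      (fun n => (hμpos n).ne') (fun _ => Set.mem_univ _) hμsum.abs
end

section
/- Let d ≥ 1, let f : ℝ^d → ℝ be differentiable with L-Lipschitz gradient ∇f, fix x, v ∈ ℝ^d, let (μ_n)_{n≥1} be positive reals with ∑_{n=1}^∞ μ_n < ∞, and let (p_n)_{n≥1} be a PMF. Writing Δ_n := (f(x + μ_n·v) − f(x))/μ_n, the series with terms a_n := p_n·Δ_1 + (Δ_{n+1} − Δ_n) (that is, a_n = p_n·[Δ_1 + (1/p_n)(Δ_{n+1} − Δ_n)]) is absolutely convergent (summable in ℝ), and ∑_{n=1}^∞ a_n = ⟨∇f(x), v⟩, the directional derivative of f at x along v. -/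
open scoped RealInnerProductSpace

/-!
A Lipschitz derivative makes the difference quotient `Δ n` differ from the directional derivative
`c` by `O(‖μ n‖)`. As `μ` is summable, so is `‖Δ n - c‖`, and hence the increments
`Δ (n + 1) - Δ n` are absolutely summable and telescope to `c - Δ 0`; the weights `p n` have total
mass one and contribute the missing `Δ 0`.
-/

section Telescoping

variable {F : Type*} [SeminormedAddCommGroup F] {u : ℕ → F} {c : F}

theorem summable_norm_succ_sub (hu : Summable fun n ↦ ‖u n - c‖) :
    Summable fun n ↦ ‖u (n + 1) - u n‖ := by
  have hsucc : Summable fun n ↦ ‖u (n + 1) - c‖ := (summable_nat_add_iff 1).2 hu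
  refine (hsucc.add hu).of_nonneg_of_le (fun _ ↦ norm_nonneg _) fun n ↦ ?_
  simpa only [sub_sub_sub_cancel_right] using norm_sub_le (u (n + 1) - c) (u n - c)

theorem hasSum_succ_sub (hu : Summable fun n ↦ ‖u n - c‖) :
    HasSum (fun n ↦ u (n + 1) - u n) (c - u 0) := by
  rw [hasSum_iff_tendsto_nat_of_summable_norm (summable_norm_succ_sub hu)]
  simp_rw [Finset.sum_range_sub]
  exact (tendsto_iff_norm_sub_tendsto_zero.2 hu.tendsto_atTop_zero).sub_const (u 0)

end Telescoping

section DifferenceQuotient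

variable {𝕜 E F : Type*} [RCLike 𝕜]
  [NormedAddCommGroup E] [NormedSpace ℝ E] [NormedSpace 𝕜 E]
  [NormedAddCommGroup F] [NormedSpace 𝕜 F]
  {f : E → F} {f' : E → E →L[𝕜] F} {s : Set E} {L : ℝ} {x v : E}

theorem norm_image_sub_sub_fderiv_le_mul_sq {y : E} (hs : Convex ℝ s)
    (hf : ∀ z ∈ s, HasFDerivWithinAt f (f' z) s z)
    (hlip : ∀ z ∈ s, ‖f' z - f' x‖ ≤ L * ‖z - x‖) (hx : x ∈ s) (hy : y ∈ s) :
    ‖f y - f x - f' x (y - x)‖ ≤ L * ‖y - x‖ ^ 2 := by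
  have hseg : segment ℝ x y ⊆ s := hs.segment_subset hx hy
  have hbound : ∀ z ∈ segment ℝ x y, ‖f' z - f' x‖ ≤ L * ‖y - x‖ := by
    intro z hz
    have hLz := hlip z (hseg hz)
    rw [segment_eq_image'] at hz
    obtain ⟨t, ⟨ht₀, ht₁⟩, rfl⟩ := hz
    calc ‖f' (x + t • (y - x)) - f' x‖
        ≤ L * ‖x + t • (y - x) - x‖ := hLz
      _ = t * (L * ‖y - x‖) := by
        rw [add_sub_cancel_left, norm_smul, Real.norm_of_nonneg ht₀, mul_left_comm]
      _ ≤ L * ‖y - x‖ :=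
        mul_le_of_le_one_left ((norm_nonneg _).trans (hlip y hy)) ht₁
  calc ‖f y - f x - f' x (y - x)‖
      ≤ L * ‖y - x‖ * ‖y - x‖ :=
        (convex_segment x y).norm_image_sub_le_of_norm_hasFDerivWithin_le'
          (fun z hz ↦ (hf z (hseg hz)).mono hseg) hbound
          (left_mem_segment ℝ x y) (right_mem_segment ℝ x y)
    _ = L * ‖y - x‖ ^ 2 := by ring

theorem norm_differenceQuotient_sub_fderiv_le {t : 𝕜} (hs : Convex ℝ s)
    (hf : ∀ z ∈ s, HasFDerivWithinAt f (f' z) s z)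
    (hlip : ∀ z ∈ s, ‖f' z - f' x‖ ≤ L * ‖z - x‖) (hx : x ∈ s) (ht : t ≠ 0)
    (hxt : x + t • v ∈ s) :
    ‖t⁻¹ • (f (x + t • v) - f x) - f' x v‖ ≤ L * ‖v‖ ^ 2 * ‖t‖ := by
  have hquad : ‖f (x + t • v) - f x - t • f' x v‖ ≤ L * ‖t • v‖ ^ 2 := by
    simpa only [add_sub_cancel_left, map_smul] using
      norm_image_sub_sub_fderiv_le_mul_sq hs hf hlip hx hxt
  have ht' : ‖t‖ ≠ 0 := norm_ne_zero_iff.2 ht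
  calc ‖t⁻¹ • (f (x + t • v) - f x) - f' x v‖
      = ‖t‖⁻¹ * ‖f (x + t • v) - f x - t • f' x v‖ := by
        rw [← norm_inv, ← norm_smul, smul_sub t⁻¹ (_ - _), inv_smul_smul₀ ht]
    _ ≤ ‖t‖⁻¹ * (L * ‖t • v‖ ^ 2) := by gcongr
    _ = L * ‖v‖ ^ 2 * ‖t‖ := by rw [norm_smul]; field_simp

theorem summable_norm_differenceQuotient_sub_fderiv {μ : ℕ → 𝕜} (hs : Convex ℝ s)
    (hf : ∀ z ∈ s, HasFDerivWithinAt f (f' z) s z)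
    (hlip : ∀ z ∈ s, ‖f' z - f' x‖ ≤ L * ‖z - x‖) (hx : x ∈ s) (hμ : ∀ n, μ n ≠ 0)
    (hμsum : Summable fun n ↦ ‖μ n‖) (hxμ : ∀ n, x + μ n • v ∈ s) :
    Summable fun n ↦ ‖(μ n)⁻¹ • (f (x + μ n • v) - f x) - f' x v‖ :=
  (hμsum.mul_left (L * ‖v‖ ^ 2)).of_nonneg_of_le (fun _ ↦ norm_nonneg _) fun n ↦
    norm_differenceQuotient_sub_fderiv_le hs hf hlip hx (hμ n) (hxμ n)

theorem telescoping_series_expectation_representation_general (hs : Convex ℝ s)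
    (hf : ∀ z ∈ s, HasFDerivWithinAt f (f' z) s z)
    (hlip : ∀ z ∈ s, ‖f' z - f' x‖ ≤ L * ‖z - x‖) (hx : x ∈ s)
    {μ : ℕ → 𝕜} (hμ : ∀ n, μ n ≠ 0) (hμsum : Summable fun n ↦ ‖μ n‖)
    (hxμ : ∀ n, x + μ n • v ∈ s) {p : ℕ → 𝕜} (hp : HasSum p 1)
    {Δ : ℕ → F} (hΔ : ∀ n, Δ n = (μ n)⁻¹ • (f (x + μ n • v) - f x)) :
    Summable (fun n ↦ ‖p n • Δ 0 + (Δ (n + 1) - Δ n)‖) ∧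
      HasSum (fun n ↦ p n • Δ 0 + (Δ (n + 1) - Δ n)) (f' x v) := by
  have herr : Summable fun n ↦ ‖Δ n - f' x v‖ := by
    simpa only [hΔ] using summable_norm_differenceQuotient_sub_fderiv hs hf hlip hx hμ hμsum hxμ
  have hweight : Summable fun n ↦ ‖p n • Δ 0‖ := by
    simpa only [norm_smul] using hp.summable.norm.mul_right ‖Δ 0‖
  constructor
  · exact (hweight.add (summable_norm_succ_sub herr)).of_nonneg_of_le
      (fun _ ↦ norm_nonneg _) fun _ ↦ norm_add_le _ _
  · simpa only [one_smul, add_sub_cancel] using (hp.smul_const (Δ 0)).add (hasSum_succ_sub herr)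

end DifferenceQuotient

theorem norm_gradient_sub_gradient {𝕜 E : Type*} [RCLike 𝕜] [NormedAddCommGroup E]
    [InnerProductSpace 𝕜 E] [CompleteSpace E] (f : E → 𝕜) (x y : E) :
    ‖gradient f x - gradient f y‖ = ‖fderiv 𝕜 f x - fderiv 𝕜 f y‖ := by
  rw [gradient, gradient, ← map_sub, LinearIsometryEquiv.norm_map]

theorem hasSum_of_tsum_eq_of_ne_zero {ι α : Type*} [AddCommMonoid α] [TopologicalSpace α]
    {g : ι → α} {b : α} (hg : ∑' i, g i = b) (hb : b ≠ 0) : HasSum g b := by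
  have hsum : Summable g := not_imp_comm.1 tsum_eq_zero_of_not_summable (hg.trans_ne hb)
  exact hg ▸ hsum.hasSum

/-- For `f` differentiable with `L`-Lipschitz gradient, positive
summable stepsizes `(μ n)` and a PMF `(p n)`, the telescoping series with terms
`a n = p n * Δ 1 + (Δ (n+1) - Δ n)` (where `Δ n := (f (x + μ n • v) - f x)/μ n`, and
the sequences are indexed so that index `0` corresponds to the paper's `n = 1`)
is absolutely convergent and sums to the directional derivative `⟪∇f x, v⟫`. -/
theorem telescoping_series_expectation_representation
    (d : ℕ) (hd : 1 ≤ d) (f : EuclideanSpace ℝ (Fin d) → ℝ) (L : ℝ)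
    (hf : Differentiable ℝ f)
    (hlip : ∀ x y : EuclideanSpace ℝ (Fin d),
      ‖gradient f x - gradient f y‖ ≤ L * ‖x - y‖)
    (x v : EuclideanSpace ℝ (Fin d))
    (μ : ℕ → ℝ) (hμpos : ∀ n, 0 < μ n) (hμsum : Summable μ)
    (p : ℕ → ℝ) (hppos : ∀ n, 0 < p n) (hpsum : ∑' n, p n = 1)
    (Δ : ℕ → ℝ) (hΔ : ∀ n, Δ n = (f (x + μ n • v) - f x) / μ n)
    (a : ℕ → ℝ) (ha : ∀ n, a n = p n * Δ 0 + (Δ (n + 1) - Δ n)) :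
    Summable (fun n => |a n|) ∧ ∑' n, a n = ⟪gradient f x, v⟫ := by
  have hrep := telescoping_series_expectation_representation_general (f' := fderiv ℝ f) (v := v)
    convex_univ (fun z _ ↦ (hf z).hasFDerivAt.hasFDerivWithinAt)
    (fun z _ ↦ (norm_gradient_sub_gradient f z x).symm.trans_le (hlip z x)) (Set.mem_univ x)
    (fun n ↦ (hμpos n).ne') hμsum.norm (fun _ ↦ Set.mem_univ _)
    (hasSum_of_tsum_eq_of_ne_zero hpsum one_ne_zero) (fun n ↦ (hΔ n).trans (div_eq_inv_mul _ _))
  simp only [smul_eq_mul, ← ha, ← inner_gradient_left] at hrep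
  exact ⟨hrep.1, hrep.2.tsum_eq⟩
end

section
/- Let d ≥ 1, let f : ℝ^d → ℝ be twice continuously differentiable with L-Lipschitz gradient ∇f, fix x ∈ ℝ^d, let (μ_n)_{n≥1} be positive reals with ∑_{n=1}^∞ μ_n < ∞, let (p_n)_{n≥1} be a PMF, and let σ_d be the uniform probability measure on the sphere {v ∈ ℝ^d : ‖v‖ = √d}. Writing Δ_n(v) := (f(x + μ_n·v) − f(x))/μ_n and P₄(n, v) := Δ_1(v) + (1/p_n)(Δ_{n+1}(v) − Δ_n(v)), the P₄-estimator is an unbiased estimator of the gradient: ∫ (∑_{n=1}^∞ p_n·P₄(n, v))·v dσ_d(v) = ∇f(x). -/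
open MeasureTheory
open scoped RealInnerProductSpace

/-!
Two facts combine. First, `v ↦ v` has second-moment matrix `1` under `σ`: invariance under the
reflection exchanging two vectors of the same norm makes `∫ ⟪u, v⟫² ∂σ` a multiple of `‖u‖²`, and
summing over an orthonormal basis identifies the multiple as `(∫ ‖v‖² ∂σ) / d = 1`; hence
`∫ ⟪g, v⟫ • v ∂σ = g`. Second, the weights `1 / p n` cancel the probabilities, so the inner sum
telescopes to `lim Δ n v = ⟪∇f x, v⟫`; its convergence holds because
`Δ n v - ⟪∇f x, v⟫ = O(μ n)` by Taylor's formula and `μ` is summable.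
-/

open Filter Asymptotics Module
open scoped Topology

theorem hasSum_sub_succ_of_summable_sub {G : Type*} [AddCommGroup G] [TopologicalSpace G]
    [IsTopologicalAddGroup G] {a : ℕ → G} {c : G} (ha : Summable fun n => a n - c) :
    HasSum (fun n => a (n + 1) - a n) (c - a 0) := by
  have hshift := (hasSum_nat_add_iff' 1).2 ha.hasSum
  convert hshift.sub ha.hasSum using 1
  · ext n
    abel
  · rw [Finset.sum_range_one]
    abel

theorem hasSum_mul_add_one_div_mul_sub_succ {K : Type*} [Field K] [TopologicalSpace K]
    [IsTopologicalRing K] {p a : ℕ → K} {c : K} (hp : ∀ n, p n ≠ 0) (hpsum : HasSum p 1)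
    (ha : Summable fun n => a n - c) :
    HasSum (fun n => p n * (a 0 + 1 / p n * (a (n + 1) - a n))) c := by
  have hcancel (n : ℕ) :
      p n * (a 0 + 1 / p n * (a (n + 1) - a n)) = p n * a 0 + (a (n + 1) - a n) := by
    rw [mul_add, ← mul_assoc, mul_one_div_cancel (hp n), one_mul]
  simp only [hcancel]
  simpa using (hpsum.mul_right (a 0)).add (hasSum_sub_succ_of_summable_sub ha)

theorem hasSum_of_tsum_eq_of_ne_zero_s6 {ι M : Type*} [AddCommMonoid M] [TopologicalSpace M]
    {p : ι → M} {s : M} (hs : s ≠ 0) (hp : ∑' i, p i = s) : HasSum p s := by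
  have hsummable : Summable p := by
    by_contra h
    exact hs (hp.symm.trans (tsum_eq_zero_of_not_summable h))
  exact hp ▸ hsummable.hasSum

theorem isBigO_sub_sub_fderiv_norm_sq {E F : Type*} [NormedAddCommGroup E] [NormedSpace ℝ E]
    [NormedAddCommGroup F] [NormedSpace ℝ F] {f : E → F} {x : E}
    (hf : ∀ᶠ y in 𝓝 x, DifferentiableAt ℝ f y)
    (hf' : (fun y => fderiv ℝ f y - fderiv ℝ f x) =O[𝓝 x] fun y => y - x) :
    (fun y => f y - f x - fderiv ℝ f x (y - x)) =O[𝓝 x] fun y => ‖y - x‖ ^ 2 := by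
  obtain ⟨C, hC, hbound⟩ := hf'.exists_nonneg
  obtain ⟨r, hr, hball⟩ := Metric.eventually_nhds_iff_ball.1 (hf.and hbound.bound)
  refine .of_bound C (eventually_of_mem (Metric.ball_mem_nhds x hr) fun y hy => ?_)
  have hsub : Metric.closedBall x ‖y - x‖ ⊆ Metric.ball x r :=
    Metric.closedBall_subset_ball (mem_ball_iff_norm.1 hy)
  have hmean : ‖f y - f x - fderiv ℝ f x (y - x)‖ ≤ C * ‖y - x‖ * ‖y - x‖ := by
    refine (convex_closedBall x ‖y - x‖).norm_image_sub_le_of_norm_fderiv_le' (𝕜 := ℝ)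
      (fun z hz => (hball z (hsub hz)).1) (fun z hz => ?_) (by simp)
      (by simp [dist_eq_norm])
    exact (hball z (hsub hz)).2.trans (by gcongr; exact mem_closedBall_iff_norm.1 hz)
  simpa [pow_two, mul_assoc] using hmean

theorem isBigO_sub_sub_inner_gradient_norm_sq {E : Type*} [NormedAddCommGroup E]
    [InnerProductSpace ℝ E] [CompleteSpace E] {f : E → ℝ} {x : E} (hf : ContDiffAt ℝ 2 f x) :
    (fun y => f y - f x - ⟪gradient f x, y - x⟫) =O[𝓝 x] fun y => ‖y - x‖ ^ 2 := by
  have hdiff : ∀ᶠ y in 𝓝 x, DifferentiableAt ℝ f y :=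
    (hf.eventually (by simp)).mono fun y hy => hy.differentiableAt (by simp)
  have hfderiv : DifferentiableAt ℝ (fderiv ℝ f) x :=
    (hf.fderiv_right (m := 1) (by norm_num)).differentiableAt (by simp)
  simpa [gradient] using isBigO_sub_sub_fderiv_norm_sq hdiff hfderiv.isBigO_sub

theorem summable_inv_smul_sub_sub {ι 𝕜 E F : Type*} [NontriviallyNormedField 𝕜]
    [NormedAddCommGroup E] [NormedSpace 𝕜 E] [NormedAddCommGroup F] [NormedSpace 𝕜 F]
    [CompleteSpace F] {f : E → F} {f' : E →L[𝕜] F} {x : E}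
    (hf : (fun y => f y - f x - f' (y - x)) =O[𝓝 x] fun y => ‖y - x‖ ^ 2)
    {μ : ι → 𝕜} (hμ : ∀ i, μ i ≠ 0) (hμsum : Summable fun i => ‖μ i‖) (v : E) :
    Summable fun i => (μ i)⁻¹ • (f (x + μ i • v) - f x) - f' v := by
  have hμ0 : Tendsto μ cofinite (𝓝 0) :=
    tendsto_zero_iff_norm_tendsto_zero.2 hμsum.tendsto_cofinite_zero
  have hx : Tendsto (fun i => x + μ i • v) cofinite (𝓝 x) := by
    simpa using (hμ0.smul_const v).const_add x
  have hremainder :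
      (fun i => ‖(μ i)⁻¹‖ * ‖f (x + μ i • v) - f x - μ i • f' v‖) =O[cofinite]
        fun i => ‖(μ i)⁻¹‖ * ‖μ i • v‖ ^ 2 :=
    (isBigO_refl _ _).mul (by simpa [Function.comp_def] using (hf.comp_tendsto hx).norm_left)
  refine summable_of_isBigO (hμsum.mul_right (‖v‖ ^ 2))
    (hremainder.congr (fun i => ?_) fun i => ?_).of_norm_left
  · rw [← norm_smul, smul_sub, inv_smul_smul₀ (hμ i)]
  · have hi : ‖μ i‖ ≠ 0 := norm_ne_zero_iff.2 (hμ i)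
    rw [norm_inv, norm_smul]
    field_simp

theorem integral_norm_sq_of_measure_sphere_eq_one {E : Type*} [SeminormedAddCommGroup E]
    [MeasurableSpace E] [OpensMeasurableSpace E] {σ : Measure E} [IsProbabilityMeasure σ] {r : ℝ}
    (hσ : σ (Metric.sphere 0 r) = 1) : ∫ v, ‖v‖ ^ 2 ∂σ = r ^ 2 := by
  have hnorm : ∀ᵐ v ∂σ, ‖v‖ ^ 2 = r ^ 2 := by
    filter_upwards [(mem_ae_iff_prob_eq_one Metric.isClosed_sphere.measurableSet).2 hσ] with v hv
    rw [mem_sphere_zero_iff_norm.1 hv]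
  simp [integral_congr_ae hnorm]

section SecondMoment

variable {E : Type*} [NormedAddCommGroup E] [InnerProductSpace ℝ E] [MeasurableSpace E]
  {σ : Measure E}

theorem integrable_inner_sq (hσ : MemLp id 2 σ) (u : E) : Integrable (fun v => ⟪u, v⟫ ^ 2) σ :=
  (hσ.const_inner u).integrable_sq

variable [BorelSpace E]

theorem integral_inner_sq_eq_of_norm_eq (hinv : ∀ R : E ≃ₗᵢ[ℝ] E, Measure.map R σ = σ)
    {u w : E} (huw : ‖u‖ = ‖w‖) : ∫ v, ⟪u, v⟫ ^ 2 ∂σ = ∫ v, ⟪w, v⟫ ^ 2 ∂σ := by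
  let R : E ≃ₗᵢ[ℝ] E := (ℝ ∙ (u - w))ᗮ.reflection
  have hRu : R u = w := Submodule.reflection_sub huw
  have hR : MeasurePreserving R.toMeasurableEquiv σ σ := ⟨R.continuous.measurable, hinv R⟩
  calc ∫ v, ⟪u, v⟫ ^ 2 ∂σ = ∫ v, ⟪w, R v⟫ ^ 2 ∂σ := by
        simp only [← hRu, R.inner_map_map]
    _ = ∫ v, ⟪w, v⟫ ^ 2 ∂σ := hR.integral_comp' fun v => ⟪w, v⟫ ^ 2

variable [FiniteDimensional ℝ E]

theorem finrank_mul_integral_inner_sq (hinv : ∀ R : E ≃ₗᵢ[ℝ] E, Measure.map R σ = σ)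
    (hσ : MemLp id 2 σ) (u : E) :
    finrank ℝ E * ∫ v, ⟪u, v⟫ ^ 2 ∂σ = ‖u‖ ^ 2 * ∫ v, ‖v‖ ^ 2 ∂σ := by
  let b := stdOrthonormalBasis ℝ E
  have hscale (i) : ‖u‖ ^ 2 * ∫ v, ⟪b i, v⟫ ^ 2 ∂σ = ∫ v, ⟪u, v⟫ ^ 2 ∂σ := by
    rw [← integral_const_mul,
      ← integral_inner_sq_eq_of_norm_eq hinv (u := ‖u‖ • b i) (by simp [norm_smul])]
    simp only [real_inner_smul_left, mul_pow]
  calc finrank ℝ E * ∫ v, ⟪u, v⟫ ^ 2 ∂σ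
      = ∑ i, ‖u‖ ^ 2 * ∫ v, ⟪b i, v⟫ ^ 2 ∂σ := by simp [hscale]
    _ = ‖u‖ ^ 2 * ∫ v, ∑ i, ⟪b i, v⟫ ^ 2 ∂σ := by
        rw [integral_finsetSum _ fun i _ => integrable_inner_sq hσ (b i), Finset.mul_sum]
    _ = ‖u‖ ^ 2 * ∫ v, ‖v‖ ^ 2 ∂σ := by simp only [b.sum_sq_inner_right]

theorem finrank_mul_integral_inner_mul_inner (hinv : ∀ R : E ≃ₗᵢ[ℝ] E, Measure.map R σ = σ)
    (hσ : MemLp id 2 σ) (u w : E) :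
    finrank ℝ E * ∫ v, ⟪u, v⟫ * ⟪w, v⟫ ∂σ = ⟪u, w⟫ * ∫ v, ‖v‖ ^ 2 ∂σ := by
  have hpolar (v : E) : ⟪u, v⟫ * ⟪w, v⟫ = (⟪u + w, v⟫ ^ 2 - ⟪u - w, v⟫ ^ 2) / 4 := by
    rw [inner_add_left, inner_sub_left]
    ring
  simp only [hpolar]
  rw [integral_div, integral_sub (integrable_inner_sq hσ _) (integrable_inner_sq hσ _)]
  have hadd := finrank_mul_integral_inner_sq hinv hσ (u + w)
  have hsub := finrank_mul_integral_inner_sq hinv hσ (u - w)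
  rw [norm_add_sq_real] at hadd
  rw [norm_sub_sq_real] at hsub
  linear_combination (hadd - hsub) / 4

theorem finrank_smul_integral_inner_smul (hinv : ∀ R : E ≃ₗᵢ[ℝ] E, Measure.map R σ = σ)
    (hσ : MemLp id 2 σ) (u : E) :
    finrank ℝ E • ∫ v, ⟪u, v⟫ • v ∂σ = (∫ v, ‖v‖ ^ 2 ∂σ) • u := by
  have := FiniteDimensional.complete ℝ E
  have hintegrable : Integrable (fun v => ⟪u, v⟫ • v) σ :=
    memLp_one_iff_integrable.1 (hσ.smul (hσ.const_inner u))
  refine ext_inner_left ℝ fun w => ?_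
  rw [← Nat.cast_smul_eq_nsmul ℝ, real_inner_smul_right, ← integral_inner hintegrable,
    real_inner_smul_right]
  simp only [real_inner_smul_right]
  rw [finrank_mul_integral_inner_mul_inner hinv hσ, real_inner_comm, mul_comm]

theorem integral_inner_smul_eq_self (hinv : ∀ R : E ≃ₗᵢ[ℝ] E, Measure.map R σ = σ)
    (hσ : ∫ v, ‖v‖ ^ 2 ∂σ = finrank ℝ E) (u : E) : ∫ v, ⟪u, v⟫ • v ∂σ = u := by
  cases subsingleton_or_nontrivial E
  · exact Subsingleton.elim _ _
  have hdim : (finrank ℝ E : ℝ) ≠ 0 := Nat.cast_ne_zero.2 finrank_pos.ne'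
  have hL2 : MemLp id 2 σ :=
    (memLp_two_iff_integrable_sq_norm aestronglyMeasurable_id).2
      (.of_integral_ne_zero (hσ.trans_ne hdim))
  have hmoment := finrank_smul_integral_inner_smul hinv hL2 u
  rw [hσ, ← Nat.cast_smul_eq_nsmul ℝ] at hmoment
  exact smul_right_injective E hdim hmoment

end SecondMoment

theorem P4_estimator_unbiased_general {E : Type*} [NormedAddCommGroup E] [InnerProductSpace ℝ E]
    [FiniteDimensional ℝ E] [MeasurableSpace E] [BorelSpace E] {f : E → ℝ} {x g : E}
    (hf : (fun y => f y - f x - ⟪g, y - x⟫) =O[𝓝 x] fun y => ‖y - x‖ ^ 2)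
    {μ : ℕ → ℝ} (hμ : ∀ n, μ n ≠ 0) (hμsum : Summable μ)
    {p : ℕ → ℝ} (hp : ∀ n, p n ≠ 0) (hpsum : HasSum p 1)
    {σ : Measure E} (hinv : ∀ R : E ≃ₗᵢ[ℝ] E, Measure.map R σ = σ)
    (hσ : ∫ v, ‖v‖ ^ 2 ∂σ = finrank ℝ E)
    {Δ : ℕ → E → ℝ} (hΔ : ∀ n v, Δ n v = (f (x + μ n • v) - f x) / μ n)
    {P₄ : ℕ → E → ℝ} (hP₄ : ∀ n v, P₄ n v = Δ 0 v + (1 / p n) * (Δ (n + 1) v - Δ n v)) :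
    ∫ v, (∑' n, p n * P₄ n v) • v ∂σ = g := by
  have herror (v : E) : Summable fun n => Δ n v - ⟪g, v⟫ := by
    simpa only [hΔ, div_eq_inv_mul, smul_eq_mul, innerSL_apply_apply] using
      summable_inv_smul_sub_sub (f' := innerSL ℝ g) hf hμ hμsum.norm v
  have hsum (v : E) : ∑' n, p n * P₄ n v = ⟪g, v⟫ := by
    simpa only [hP₄] using (hasSum_mul_add_one_div_mul_sub_succ hp hpsum (herror v)).tsum_eq
  simp only [hsum]
  exact integral_inner_smul_eq_self hinv hσ g

/-- For `f` twice continuously differentiable with `L`-Lipschitz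
gradient, positive summable stepsizes `(μ n)`, a PMF `(p n)` and `σ` the uniform
probability measure on the sphere of radius `√d`, the `P₄`-estimator
`P₄ n v = Δ 1 v + (1/p n) (Δ (n+1) v - Δ n v)` (index `0` corresponds to the paper's
`n = 1`, `Δ n v := (f (x + μ n • v) - f x)/μ n`) is an unbiased estimator of the
gradient: `∫ (∑ n, p n * P₄ n v) • v dσ(v) = ∇f x`. -/
theorem P4_estimator_unbiased
    (d : ℕ) (hd : 1 ≤ d) (f : EuclideanSpace ℝ (Fin d) → ℝ) (L : ℝ)
    (hf : ContDiff ℝ 2 f)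
    (hlip : ∀ x y : EuclideanSpace ℝ (Fin d),
      ‖gradient f x - gradient f y‖ ≤ L * ‖x - y‖)
    (x : EuclideanSpace ℝ (Fin d))
    (μ : ℕ → ℝ) (hμpos : ∀ n, 0 < μ n) (hμsum : Summable μ)
    (p : ℕ → ℝ) (hppos : ∀ n, 0 < p n) (hpsum : ∑' n, p n = 1)
    (σ : Measure (EuclideanSpace ℝ (Fin d))) [IsProbabilityMeasure σ]
    (hsupp : σ (Metric.sphere (0 : EuclideanSpace ℝ (Fin d)) (Real.sqrt d)) = 1)
    (hinv : ∀ R : EuclideanSpace ℝ (Fin d) ≃ₗᵢ[ℝ] EuclideanSpace ℝ (Fin d),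
      Measure.map R σ = σ)
    (Δ : ℕ → EuclideanSpace ℝ (Fin d) → ℝ)
    (hΔ : ∀ n v, Δ n v = (f (x + μ n • v) - f x) / μ n)
    (P₄ : ℕ → EuclideanSpace ℝ (Fin d) → ℝ)
    (hP₄ : ∀ n v, P₄ n v = Δ 0 v + (1 / p n) * (Δ (n + 1) v - Δ n v)) :
    ∫ v, (∑' n, p n * P₄ n v) • v ∂σ = gradient f x := by
  have hσ : ∫ v, ‖v‖ ^ 2 ∂σ = finrank ℝ (EuclideanSpace ℝ (Fin d)) := by
    simp [integral_norm_sq_of_measure_sphere_eq_one hsupp]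
  exact P4_estimator_unbiased_general (isBigO_sub_sub_inner_gradient_norm_sq hf.contDiffAt)
    (fun n => (hμpos n).ne') hμsum (fun n => (hppos n).ne')
    (hasSum_of_tsum_eq_of_ne_zero_s6 one_ne_zero hpsum) hinv hσ hΔ hP₄
end

section
/- Let d ≥ 1, let f : ℝ^d → ℝ be continuous, fix x, v ∈ ℝ^d with f(x) ≠ 0, let (μ_n)_{n≥1} be a sequence of positive reals with μ_n → 0, and let (p_n)_{n≥1} be a PMF. Then the nonnegative sequence n ↦ f(x + μ_n·v)²/(p_n·μ_n²) is not summable, i.e. ∑_{n=1}^∞ f(x + μ_n·v)²/(p_n·μ_n²) = ∞ in [0, ∞]. (This is the key divergence underlying the infinite variance of the single-evaluation P₁-estimator.) -/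
open scoped ENNReal

/-!
As `p` is bounded and `μ → 0`, the denominators `p n * μ n ^ 2` tend to `0` from above, while by
continuity the numerators tend to `f x ^ 2 > 0`. So the terms tend to `∞`, and in particular not
to `0`, which already forces divergence.
-/

open Filter Topology

lemma tsum_eq_top_of_tendsto_ne_zero {ι : Type*} {l : Filter ι} [l.NeBot] (hl : l ≤ cofinite)
    {u : ι → ℝ≥0∞} {c : ℝ≥0∞} (hu : Tendsto u l (𝓝 c)) (hc : c ≠ 0) : ∑' i, u i = ∞ := by
  by_contra hsum
  exact hc <| tendsto_nhds_unique hu <|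
    (ENNReal.tendsto_cofinite_zero_of_tsum_ne_top hsum).mono_left hl

section OrderedField

variable {ι 𝕜 : Type*} [Field 𝕜] [LinearOrder 𝕜] [IsStrictOrderedRing 𝕜] [TopologicalSpace 𝕜]
  [OrderTopology 𝕜] {l : Filter ι} {a b : ι → 𝕜}

lemma tendsto_sq_nhdsNE_zero_nhdsGT_zero : Tendsto (fun t : 𝕜 => t ^ 2) (𝓝[≠] 0) (𝓝[>] 0) := by
  have hcont : Tendsto (fun t : 𝕜 => t ^ 2) (𝓝 0) (𝓝 0) :=
    (continuous_pow 2).tendsto' 0 0 (zero_pow two_ne_zero)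
  exact hcont.inf (tendsto_principal_principal.2 fun _ => sq_pos_of_ne_zero)

lemma tendsto_mul_nhdsGT_zero_of_isBoundedUnder (ha : ∀ᶠ i in l, 0 < a i)
    (ha_bdd : l.IsBoundedUnder (· ≤ ·) a) (hb : Tendsto b l (𝓝[>] 0)) :
    Tendsto (fun i => a i * b i) l (𝓝[>] 0) := by
  obtain ⟨C, hC⟩ := ha_bdd.eventually_le
  obtain ⟨hb_zero, hb_pos⟩ := tendsto_nhdsWithin_iff.1 hb
  have hab_pos : ∀ᶠ i in l, 0 < a i * b i := by
    filter_upwards [ha, hb_pos] with i hai hbi using mul_pos hai hbi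
  have hab_le : ∀ᶠ i in l, a i * b i ≤ C * b i := by
    filter_upwards [hC, hb_pos] with i hai hbi using mul_le_mul_of_nonneg_right hai hbi.le
  have hCb : Tendsto (fun i => C * b i) l (𝓝 0) := by
    simpa only [mul_zero] using hb_zero.const_mul C
  exact tendsto_nhdsWithin_iff.2 ⟨tendsto_of_tendsto_of_tendsto_of_le_of_le' tendsto_const_nhds hCb
    (hab_pos.mono fun _ => le_of_lt) hab_le, hab_pos⟩

lemma tendsto_div_atTop_of_tendsto_nhdsGT_zero {c : 𝕜} (hc : 0 < c) (ha : Tendsto a l (𝓝 c))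
    (hb : Tendsto b l (𝓝[>] 0)) : Tendsto (fun i => a i / b i) l atTop := by
  simpa only [div_eq_mul_inv, Pi.inv_apply] using ha.pos_mul_atTop hc hb.inv_tendsto_nhdsGT_zero

end OrderedField

theorem P1_key_divergence_general {ι E : Type*} [AddCommMonoid E] [Module ℝ E] [TopologicalSpace E]
    [ContinuousAdd E] [ContinuousSMul ℝ E] {l : Filter ι} [l.NeBot] (hl : l ≤ cofinite)
    {f : E → ℝ} {x : E} (v : E) (hf : ContinuousAt f x) (hfx : f x ≠ 0) {μ p : ι → ℝ}
    (hμ : Tendsto μ l (𝓝[≠] 0)) (hp : ∀ᶠ i in l, 0 < p i)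
    (hp_bdd : l.IsBoundedUnder (· ≤ ·) p) :
    ∑' i, ENNReal.ofReal (f (x + μ i • v) ^ 2 / (p i * μ i ^ 2)) = ∞ := by
  have hpoints : Tendsto (fun i => x + μ i • v) l (𝓝 x) := by
    simpa only [zero_smul, add_zero] using
      ((tendsto_nhds_of_tendsto_nhdsWithin hμ).smul_const v).const_add x
  have hnum : Tendsto (fun i => f (x + μ i • v) ^ 2) l (𝓝 (f x ^ 2)) :=
    (hf.tendsto.comp hpoints).pow 2
  have hden : Tendsto (fun i => p i * μ i ^ 2) l (𝓝[>] 0) :=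
    tendsto_mul_nhdsGT_zero_of_isBoundedUnder hp hp_bdd (tendsto_sq_nhdsNE_zero_nhdsGT_zero.comp hμ)
  have hterms := tendsto_div_atTop_of_tendsto_nhdsGT_zero (sq_pos_of_ne_zero hfx) hnum hden
  exact tsum_eq_top_of_tendsto_ne_zero hl (ENNReal.tendsto_ofReal_atTop.comp hterms)
    ENNReal.top_ne_zero

/-- For `f : ℝ^d → ℝ` continuous with `f x ≠ 0`, positive stepsizes
`μ n → 0` and a PMF `(p n)`, the nonnegative sequence
`n ↦ f(x + μ n • v)² / (p n * μ n²)` is not summable: its sum in `[0, ∞]` is `∞`.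
(This is the key divergence underlying the infinite variance of the single-evaluation
`P₁`-estimator.) -/
theorem P1_key_divergence
    (d : ℕ) (hd : 1 ≤ d) (f : EuclideanSpace ℝ (Fin d) → ℝ)
    (hf : Continuous f)
    (x v : EuclideanSpace ℝ (Fin d)) (hfx : f x ≠ 0)
    (μ : ℕ → ℝ) (hμpos : ∀ n, 0 < μ n)
    (hμ0 : Filter.Tendsto μ Filter.atTop (nhds 0))
    (p : ℕ → ℝ) (hppos : ∀ n, 0 < p n) (hpsum : ∑' n, p n = 1) :
    ∑' n, ENNReal.ofReal (f (x + μ n • v) ^ 2 / (p n * μ n ^ 2)) = ∞ := by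
  have hp_summable : Summable p :=
    not_imp_comm.1 tsum_eq_zero_of_not_summable (hpsum.trans_ne one_ne_zero)
  exact P1_key_divergence_general Nat.cofinite_eq_atTop.ge v hf.continuousAt hfx
    (tendsto_nhdsWithin_iff.2 ⟨hμ0, .of_forall fun n => (hμpos n).ne'⟩) (.of_forall hppos)
    hp_summable.tendsto_atTop_zero.isBoundedUnder_le
end

section
/- Let d ≥ 1, let f : ℝ^d → ℝ be twice continuously differentiable with L-Lipschitz gradient, and let x ∈ ℝ^d be a point where the Hessian ∇²f(x) is positive definite and f(x) ≠ 0. Let (μ_n)_{n≥1} be a positive decreasing sequence with ∑_{n=1}^∞ μ_n < ∞, let (p_n)_{n≥1} be a PMF, and fix v ∈ ℝ^d. Then the conditional second moment of the P₁-estimator is infinite: with T₀(n) := f(x)·(1/μ_1 + (1/p_n)(1/μ_{n+1} − 1/μ_n)), T₁ := f(x + μ_1·v)/μ_1, T₂(n) := f(x + μ_{n+1}·v)/(p_n·μ_{n+1}), T₃(n) := f(x + μ_n·v)/(p_n·μ_n), one has ∑_{n=1}^∞ (p_n/4)·(T₀(n)² + T₁² + T₂(n)² + T₃(n)²) = ∞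 in [0, ∞]. -/
open scoped ENNReal RealInnerProductSpace

/-!
Since `f (x + μ n • v) → f x ≠ 0`, while `p` is bounded and `μ n → 0`, the contribution
`p n / 4 * T₃ n ^ 2 = f (x + μ n • v) ^ 2 / (4 * p n * μ n ^ 2)` of a single outcome already tends
to infinity: the outcome carries the weight `1 / p n`, and squaring it leaves one such factor
uncancelled by the probability `p n`.
-/

open Filter Topology

theorem tsum_ennreal_eq_top_of_tendsto {ι : Type*} {u : ι → ℝ≥0∞} {l : Filter ι} [l.NeBot]
    {c : ℝ≥0∞} (hl : l ≤ cofinite) (hu : Tendsto u l (𝓝 c)) (hc : c ≠ 0) :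
    ∑' i, u i = ∞ := by
  by_contra hsum
  have hu_zero : Tendsto u l (𝓝 0) :=
    (ENNReal.tendsto_cofinite_zero_of_tsum_ne_top hsum).mono_left hl
  exact hc (tendsto_nhds_unique hu hu_zero)

section Field

variable {ι 𝕜 : Type*} [Field 𝕜] [LinearOrder 𝕜] [IsStrictOrderedRing 𝕜] [TopologicalSpace 𝕜]
  [OrderTopology 𝕜] {l : Filter ι} {p μ g : ι → 𝕜} {a : 𝕜}

theorem tendsto_mul_sq_nhdsGT_zero (hp : ∀ᶠ i in l, 0 < p i) (hp_bdd : l.IsBoundedUnder (· ≤ ·) p)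
    (hμ : Tendsto μ l (𝓝[≠] 0)) :
    Tendsto (fun i ↦ p i * μ i ^ 2) l (𝓝[>] 0) := by
  obtain ⟨hμ_zero, hμ_ne⟩ := tendsto_nhdsWithin_iff.mp hμ
  obtain ⟨C, hC⟩ := hp_bdd.eventually_le
  have h_upper : Tendsto (fun i ↦ C * μ i ^ 2) l (𝓝 0) := by
    simpa using (hμ_zero.pow 2).const_mul C
  have h_pos : ∀ᶠ i in l, 0 < p i * μ i ^ 2 := by
    filter_upwards [hp, hμ_ne] with i hpi hμi
    exact mul_pos hpi (sq_pos_of_ne_zero hμi)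
  refine tendsto_nhdsWithin_iff.mpr ⟨?_, h_pos⟩
  refine tendsto_of_tendsto_of_tendsto_of_le_of_le' tendsto_const_nhds h_upper
    (h_pos.mono fun _ ↦ le_of_lt) ?_
  filter_upwards [hC] with i hi
  gcongr

theorem tendsto_mul_sq_div_mul_atTop (hg : Tendsto g l (𝓝 a)) (ha : a ≠ 0)
    (hp : ∀ᶠ i in l, 0 < p i) (hp_bdd : l.IsBoundedUnder (· ≤ ·) p)
    (hμ : Tendsto μ l (𝓝[≠] 0)) :
    Tendsto (fun i ↦ p i * (g i / (p i * μ i)) ^ 2) l atTop := by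
  have h_inv : Tendsto (fun i ↦ (p i * μ i ^ 2)⁻¹) l atTop :=
    (tendsto_mul_sq_nhdsGT_zero hp hp_bdd hμ).inv_tendsto_nhdsGT_zero
  refine ((hg.pow 2).pos_mul_atTop (sq_pos_of_ne_zero ha) h_inv).congr' ?_
  filter_upwards [hp] with i hpi
  field_simp

end Field

section Estimator

variable {E : Type*} [AddCommGroup E] [Module ℝ E]

/-- The four possible outcomes, up to sign, of the `P₁`-estimator of the derivative of `f` at `x`
in the direction `v` when the level `n` is drawn: the entry `i` is `Tᵢ`. Level `0` is the paper's
`n = 1`. -/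
noncomputable def p1Outcome (f : E → ℝ) (x v : E) (μ p : ℕ → ℝ) (n : ℕ) : Fin 4 → ℝ :=
  ![f x * (1 / μ 0 + (1 / p n) * (1 / μ (n + 1) - 1 / μ n)),
    f (x + μ 0 • v) / μ 0,
    f (x + μ (n + 1) • v) / (p n * μ (n + 1)),
    f (x + μ n • v) / (p n * μ n)]

/-- The second moment of the `P₁`-estimator given the direction `v`: the level `n` has weight `p n`
and each of its four outcomes conditional probability `1 / 4`. It is valued in `[0, ∞]`, so that
divergence is not hidden by the value `0` of a divergent real series. -/
noncomputable def p1SecondMoment (f : E → ℝ) (x v : E) (μ p : ℕ → ℝ) : ℝ≥0∞ :=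
  ∑' n, ENNReal.ofReal (p n / 4 * ∑ i, p1Outcome f x v μ p n i ^ 2)

variable [TopologicalSpace E] [ContinuousAdd E] [ContinuousSMul ℝ E]
  {f : E → ℝ} {x : E} {μ p : ℕ → ℝ}

theorem tendsto_mul_sq_p1Outcome_three_atTop (hf : ContinuousAt f x) (hfx : f x ≠ 0)
    (hμ : Tendsto μ atTop (𝓝[≠] 0)) (hp : ∀ n, 0 < p n) (hp_bdd : BddAbove (Set.range p)) (v : E) :
    Tendsto (fun n ↦ p n * p1Outcome f x v μ p n 3 ^ 2) atTop atTop := by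
  have h_point : Tendsto (fun n ↦ x + μ n • v) atTop (𝓝 x) := by
    simpa using ((tendsto_nhds_of_tendsto_nhdsWithin hμ).smul_const v).const_add x
  exact tendsto_mul_sq_div_mul_atTop (hf.tendsto.comp h_point) hfx (.of_forall hp)
    hp_bdd.isBoundedUnder_of_range hμ

theorem P1_estimator_infinite_second_moment_general (hf : ContinuousAt f x) (hfx : f x ≠ 0)
    (hμ_ne : ∀ n, μ n ≠ 0) (hμ : Tendsto μ atTop (𝓝 0))
    (hp : ∀ n, 0 < p n) (hp_bdd : BddAbove (Set.range p)) (v : E) :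
    p1SecondMoment f x v μ p = ∞ := by
  have hμ' : Tendsto μ atTop (𝓝[≠] 0) := tendsto_nhdsWithin_iff.mpr ⟨hμ, .of_forall hμ_ne⟩
  have h_three := tendsto_mul_sq_p1Outcome_three_atTop hf hfx hμ' hp hp_bdd v
  have h_term : Tendsto (fun n ↦ p n / 4 * ∑ i, p1Outcome f x v μ p n i ^ 2) atTop atTop := by
    refine tendsto_atTop_mono (fun n ↦ ?_) (h_three.atTop_div_const four_pos)
    rw [mul_div_right_comm]
    have hpn := hp n
    gcongr
    exact Finset.single_le_sum (f := fun i ↦ p1Outcome f x v μ p n i ^ 2)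
      (fun i _ ↦ sq_nonneg _) (Finset.mem_univ 3)
  exact tsum_ennreal_eq_top_of_tendsto Nat.cofinite_eq_atTop.ge
    (ENNReal.tendsto_ofReal_nhds_top.mpr h_term) ENNReal.top_ne_zero

end Estimator

/-- For `f : ℝ^d → ℝ` twice continuously differentiable with
`L`-Lipschitz gradient, at a point `x` where the Hessian is positive definite and
`f x ≠ 0`, for any positive decreasing summable stepsizes `(μ n)`, PMF `(p n)`
(index `0` corresponds to the paper's `n = 1`) and direction `v`, the conditional
second moment of the `P₁`-estimator is infinite:
`∑ (p n / 4) (T₀ n² + T₁² + T₂ n² + T₃ n²) = ∞` in `[0, ∞]`, where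
`T₀ n = f x * (1/μ 1 + (1/p n)(1/μ (n+1) - 1/μ n))`, `T₁ = f (x + μ 1 • v)/μ 1`,
`T₂ n = f (x + μ (n+1) • v)/(p n * μ (n+1))`, `T₃ n = f (x + μ n • v)/(p n * μ n)`. -/
theorem P1_estimator_infinite_second_moment
    (d : ℕ) (hd : 1 ≤ d) (f : EuclideanSpace ℝ (Fin d) → ℝ) (L : ℝ)
    (hf : ContDiff ℝ 2 f)
    (hlip : ∀ x y : EuclideanSpace ℝ (Fin d),
      ‖gradient f x - gradient f y‖ ≤ L * ‖x - y‖)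
    (x : EuclideanSpace ℝ (Fin d))
    (hHess : ∀ w : EuclideanSpace ℝ (Fin d), w ≠ 0 →
      0 < ⟪w, fderiv ℝ (gradient f) x w⟫)
    (hfx : f x ≠ 0)
    (μ : ℕ → ℝ) (hμpos : ∀ n, 0 < μ n) (hμdec : ∀ n, μ (n + 1) ≤ μ n)
    (hμsum : Summable μ)
    (p : ℕ → ℝ) (hppos : ∀ n, 0 < p n) (hpsum : ∑' n, p n = 1)
    (v : EuclideanSpace ℝ (Fin d))
    (T₀ : ℕ → ℝ)
    (hT₀ : ∀ n, T₀ n = f x * (1 / μ 0 + (1 / p n) * (1 / μ (n + 1) - 1 / μ n)))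
    (T₁ : ℝ) (hT₁ : T₁ = f (x + μ 0 • v) / μ 0)
    (T₂ : ℕ → ℝ) (hT₂ : ∀ n, T₂ n = f (x + μ (n + 1) • v) / (p n * μ (n + 1)))
    (T₃ : ℕ → ℝ) (hT₃ : ∀ n, T₃ n = f (x + μ n • v) / (p n * μ n)) :
    ∑' n, ENNReal.ofReal ((p n / 4) * (T₀ n ^ 2 + T₁ ^ 2 + T₂ n ^ 2 + T₃ n ^ 2)) = ∞ := by
  have hp_summable : Summable p := by
    by_contra h
    simp [tsum_eq_zero_of_not_summable h] at hpsum
  simpa only [p1SecondMoment, p1Outcome, Fin.sum_univ_four, Matrix.cons_val, hT₀, hT₁, hT₂, hT₃]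
    using P1_estimator_infinite_second_moment_general hf.continuous.continuousAt hfx
      (fun n ↦ (hμpos n).ne') hμsum.tendsto_atTop_zero hppos
      hp_summable.tendsto_atTop_zero.bddAbove_range v
end
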